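/- arXiv:2108.03450 — 2 statements merged into one kernel-verified Lean document; each statement's English description precedes it below -/
import Mathlib

section
/- Let η and χ be Borel probability measures on ℝ with finite first moments. The following are equivalent: (1) η ≤_cd χ; (2) P_η(k) ≤ P_χ(k) for all k ∈ ℝ; (3) there exists a supermartingale coupling of η and χ. -/
open MeasureTheory Set Filter

noncomputable section

/-- `η ∈ 𝓜`: a finite Borel measure on ℝ with finite first moment. -/
def MemM (η : MeasureTheory.Measure ℝ) : Prop :=
  MeasureTheory.IsFiniteMeasure η ∧ MeasureTheory.Integrable (fun x : ℝ => x) η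

/-- Convex-decreasing order `≤_cd`. -/
def LeCD (η χ : MeasureTheory.Measure ℝ) : Prop :=
  ∀ f : ℝ → ℝ, ConvexOn ℝ Set.univ f → Antitone f →
    MeasureTheory.Integrable f η → MeasureTheory.Integrable f χ →
    ∫ x, f x ∂η ≤ ∫ x, f x ∂χ

/-- Positive convex-decreasing order `≤_pcd`. -/
def LePCD (η χ : MeasureTheory.Measure ℝ) : Prop :=
  ∀ f : ℝ → ℝ, (∀ x, 0 ≤ f x) → ConvexOn ℝ Set.univ f → Antitone f →
    MeasureTheory.Integrable f η → MeasureTheory.Integrable f χ →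
    ∫ x, f x ∂η ≤ ∫ x, f x ∂χ

/-- Positive convex order `≤_pc`. -/
def LePC (η χ : MeasureTheory.Measure ℝ) : Prop :=
  ∀ f : ℝ → ℝ, (∀ x, 0 ≤ f x) → ConvexOn ℝ Set.univ f →
    MeasureTheory.Integrable f η → MeasureTheory.Integrable f χ →
    ∫ x, f x ∂η ≤ ∫ x, f x ∂χ

/-- A supermartingale coupling of `η` and `χ`. -/
def IsSupermartingaleCoupling (η χ : MeasureTheory.Measure ℝ)
    (π : MeasureTheory.Measure (ℝ × ℝ)) : Prop :=
  MeasureTheory.IsProbabilityMeasure π ∧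
  π.map Prod.fst = η ∧ π.map Prod.snd = χ ∧
  MeasureTheory.Integrable (fun p : ℝ × ℝ => p.2) π ∧
  ∀ B : Set ℝ, MeasurableSet B →
    ∫ p in B ×ˢ (Set.univ : Set ℝ), (p : ℝ × ℝ).2 ∂π ≤ ∫ x in B, x ∂η

/-- The potential function `P_η(k) = ∫ (k-x)⁺ η(dx)`. -/
def Ppot (η : MeasureTheory.Measure ℝ) (k : ℝ) : ℝ := ∫ x, max (k - x) 0 ∂η

/-- The potential function `C_η(k) = ∫ (x-k)⁺ η(dx)`. -/
def Cpot (η : MeasureTheory.Measure ℝ) (k : ℝ) : ℝ := ∫ x, max (x - k) 0 ∂η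

/-- The left-continuous quantile function `G_η(u) = sup {k | η((-∞,k]) < u}`. -/
def quantile (η : MeasureTheory.Measure ℝ) (u : ℝ) : ℝ :=
  sSup {k : ℝ | (η (Set.Iic k)).toReal < u}

/-- The lift `μ_u = μ|_{(-∞,G(u))} + (u - μ((-∞,G(u)))) δ_{G(u)}`, with `μ_0 = 0`, `μ_1 = μ`. -/
def muU (μ : MeasureTheory.Measure ℝ) (u : ℝ) : MeasureTheory.Measure ℝ :=
  if u ≤ 0 then 0
  else if 1 ≤ u then μ
  else μ.restrict (Set.Iio (quantile μ u)) +
    (ENNReal.ofReal (u - (μ (Set.Iio (quantile μ u))).toReal)) •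
      MeasureTheory.Measure.dirac (quantile μ u)

/-- `S` is a shadow of `μ` in `ν`. -/
def IsShadow (μ ν S : MeasureTheory.Measure ℝ) : Prop :=
  MemM S ∧ LeCD μ S ∧ (∀ A : Set ℝ, MeasurableSet A → S A ≤ ν A) ∧
  ∀ η : MeasureTheory.Measure ℝ, MemM η → LeCD μ η →
    (∀ A : Set ℝ, MeasurableSet A → η A ≤ ν A) → LeCD S η

/-- `h` is the convex hull of `f`. -/
def IsConvexHullFn (f h : ℝ → ℝ) : Prop :=
  ConvexOn ℝ Set.univ h ∧ (∀ x, h x ≤ f x) ∧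
  ∀ g : ℝ → ℝ, ConvexOn ℝ Set.univ g → (∀ x, g x ≤ f x) → ∀ x, g x ≤ h x

/-- The class `𝒟(a,b)`. -/
def MemD (a b : ℝ) (f : ℝ → ℝ) : Prop :=
  (∀ x, 0 ≤ f x) ∧ Monotone f ∧ ConvexOn ℝ Set.univ f ∧
  Filter.Tendsto f Filter.atBot (nhds 0) ∧
  Filter.Tendsto (fun z => f z - (a * z - b)) Filter.atTop (nhds 0)

/-- The topological support of a measure. -/
def msupport (η : MeasureTheory.Measure ℝ) : Set ℝ :=
  {x : ℝ | ∀ U ∈ nhds x, η U ≠ 0}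

lemma integrable_put {η : Measure ℝ} [IsFiniteMeasure η]
    (hη : Integrable (fun x : ℝ => x) η) (k : ℝ) : Integrable (fun x => max (k - x) 0) η :=
  ((integrable_const k).sub hη).pos_part

lemma max_fold_max_zero {ι : Type*} (s : Finset ι) (g : ι → ℝ) {t : ℝ} (ht : 0 ≤ t) :
    max t (s.fold max 0 g) = t + s.fold max 0 (fun i => g i - t) := by
  classical
  induction s using Finset.induction_on with
  | empty => simp [ht]
  | insert i s hi ih =>
    rw [Finset.fold_insert hi, Finset.fold_insert hi, max_left_comm, ih]
    rw [← max_add_add_left, add_sub_cancel]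

/-- Adding a piece of largest slope to a maximum of decreasing affine functions either does not
change its positive part, or splits it into a sum of two simpler ones. -/
lemma affine_fold_dichotomy {ι : Type*} (s : Finset ι) (a b : ι → ℝ) {α β c d : ℝ}
    (has : ∀ i ∈ s, a i ≤ α) (hα : α < c) (k : ℝ) (hk : (α - c) * k + (β - d) = 0) :
    (∀ x, max ((α - c) * x + (β - d)) (s.fold max 0 fun i => (a i - c) * x + (b i - d)) =
      s.fold max 0 fun i => (a i - c) * x + (b i - d)) ∨
    (∀ x, max ((α - c) * x + (β - d)) (s.fold max 0 fun i => (a i - c) * x + (b i - d)) =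
      (c - α) * max (k - x) 0 + s.fold max 0 fun i => (a i - α) * x + (b i - β)) := by
  by_cases h : ∃ i ∈ s, 0 < (a i - c) * k + (b i - d)
  · obtain ⟨i, his, hi⟩ := h
    left
    intro x
    apply max_eq_right
    rw [Finset.le_fold_max]
    rcases le_total k x with hx | hx
    · left; nlinarith
    · right
      refine ⟨i, his, ?_⟩
      nlinarith [has i his]
  · push Not at h
    right
    intro x
    rcases le_total k x with hx | hx
    · have h0 : (s.fold max 0 fun i => (a i - c) * x + (b i - d)) = 0 := by
        refine le_antisymm ?_ (by simp [Finset.le_fold_max])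
        rw [Finset.fold_max_le]
        exact ⟨le_rfl, fun i hi => by nlinarith [has i hi, h i hi]⟩
      have h1 : (s.fold max 0 fun i => (a i - α) * x + (b i - β)) = 0 := by
        refine le_antisymm ?_ (by simp [Finset.le_fold_max])
        rw [Finset.fold_max_le]
        exact ⟨le_rfl, fun i hi => by nlinarith [has i hi, h i hi]⟩
      rw [h0, h1, max_eq_right (by linarith : k - x ≤ 0), max_eq_right (by nlinarith)]
      simp
    · rw [max_fold_max_zero _ _ (by nlinarith : 0 ≤ (α - c) * x + (β - d)),
        max_eq_left (by linarith : 0 ≤ k - x)]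
      congr 1
      · linarith
      · congr 1
        ext i
        ring

lemma integral_fold_max_le {η χ : Measure ℝ} [IsProbabilityMeasure η] [IsProbabilityMeasure χ]
    (hη : Integrable (fun x : ℝ => x) η) (hχ : Integrable (fun x : ℝ => x) χ)
    (hP : ∀ k, Ppot η k ≤ Ppot χ k) {ι : Type*} (a b : ι → ℝ) (s : Finset ι) :
    ∀ c d : ℝ, (∀ i ∈ s, a i ≤ c) →
      Integrable (fun x => s.fold max 0 fun i => (a i - c) * x + (b i - d)) η ∧
      Integrable (fun x => s.fold max 0 fun i => (a i - c) * x + (b i - d)) χ ∧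
      ∫ x, s.fold max 0 (fun i => (a i - c) * x + (b i - d)) ∂η ≤
        ∫ x, s.fold max 0 (fun i => (a i - c) * x + (b i - d)) ∂χ := by
  classical
  induction s using Finset.induction_on_max_value a with
  | empty => simp
  | insert j s hj hmax ih =>
    intro c d hc
    have hcs : ∀ i ∈ s, a i ≤ c := fun i hi => hc i (Finset.mem_insert_of_mem hi)
    simp only [Finset.fold_insert hj]
    rcases (hc j (Finset.mem_insert_self _ _)).lt_or_eq with hjc | hjc
    · have hne : a j - c ≠ 0 := by linarith
      have hk : (a j - c) * (-(b j - d) / (a j - c)) + (b j - d) = 0 := by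
        field_simp; ring
      rcases affine_fold_dichotomy s a b hmax hjc _ hk with h | h
      · simp only [h]
        exact ih c d hcs
      · simp only [h]
        obtain ⟨i1, i2, i3⟩ := ih (a j) (b j) hmax
        have j1 := (integrable_put hη (-(b j - d) / (a j - c))).const_mul (c - a j)
        have j2 := (integrable_put hχ (-(b j - d) / (a j - c))).const_mul (c - a j)
        refine ⟨j1.add i1, j2.add i2, ?_⟩
        rw [integral_add j1 i1, integral_add j2 i2, integral_const_mul, integral_const_mul]
        have := mul_le_mul_of_nonneg_left (hP (-(b j - d) / (a j - c))) (sub_nonneg.2 hjc.le)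
        simp only [Ppot] at this
        linarith
    · simp only [← hjc, sub_self, zero_mul, zero_add]
      rw [← hjc] at hcs
      rcases le_total (b j - d) 0 with h | h
      · have : ∀ x : ℝ, max (b j - d) (s.fold max 0 fun i => (a i - a j) * x + (b i - d)) =
            s.fold max 0 fun i => (a i - a j) * x + (b i - d) := fun x =>
          max_eq_right ((Finset.le_fold_max _).2 (.inl h))
        simp only [this]
        exact ih (a j) d hcs
      · simp only [max_fold_max_zero _ _ h]
        have : ∀ x : ℝ, (s.fold max 0 fun i => (a i - a j) * x + (b i - d) - (b j - d)) =
            s.fold max 0 fun i => (a i - a j) * x + (b i - b j) := fun x => by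
          congr 1; ext i; ring
        simp only [this]
        obtain ⟨i1, i2, i3⟩ := ih (a j) (b j) hmax
        refine ⟨(integrable_const _).add i1, (integrable_const _).add i2, ?_⟩
        rw [integral_add (integrable_const _) i1, integral_add (integrable_const _) i2]
        simpa using i3

lemma slope_nonpos_of_le_antitone {f : ℝ → ℝ} (hf : Antitone f) {a b : ℝ}
    (h : ∀ x, a * x + b ≤ f x) : a ≤ 0 := by
  by_contra! ha
  have h1 := h (max 0 ((f 0 - b + 1) / a))
  have h2 := hf (le_max_left 0 ((f 0 - b + 1) / a))
  have h3 : f 0 - b + 1 ≤ a * max 0 ((f 0 - b + 1) / a) := by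
    calc f 0 - b + 1 = a * ((f 0 - b + 1) / a) := by field_simp
      _ ≤ _ := mul_le_mul_of_nonneg_left (le_max_right _ _) ha.le
  linarith

lemma tendsto_fold_max_range {u : ℕ → ℝ} {L : ℝ} (hu : ∀ i, u i ≤ L) (hL : ⨆ i, u i = L) :
    Tendsto (fun n => (Finset.range n).fold max 0 u) atTop (nhds (max L 0)) := by
  have hmono : Monotone fun n => (Finset.range n).fold max 0 u := by
    intro m n hmn
    simp only
    rw [Finset.fold_max_le]
    refine ⟨by simp [Finset.le_fold_max], fun i hi => ?_⟩
    rw [Finset.le_fold_max]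
    exact .inr ⟨i, Finset.range_mono hmn hi, le_rfl⟩
  refine tendsto_atTop_isLUB hmono ⟨?_, ?_⟩
  · rintro _ ⟨n, rfl⟩
    simp only
    rw [Finset.fold_max_le]
    exact ⟨le_max_right _ _, fun i _ => (hu i).trans (le_max_left _ _)⟩
  · intro M hM
    have hM' : ∀ n, (Finset.range n).fold max 0 u ≤ M := fun n => hM ⟨n, rfl⟩
    refine max_le ?_ (by simpa using hM' 0)
    rw [← hL]
    exact ciSup_le fun i => (Finset.fold_max_le _ |>.1 (hM' (i + 1))).2 i (by simp)

lemma convex_continuous {f : ℝ → ℝ} (hf : ConvexOn ℝ univ f) : Continuous f :=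
  continuousOn_univ.1 (hf.continuousOn isOpen_univ)

lemma integral_posPart_le_of_Ppot_le {η χ : Measure ℝ} [IsProbabilityMeasure η]
    [IsProbabilityMeasure χ]
    (hη : Integrable (fun x : ℝ => x) η) (hχ : Integrable (fun x : ℝ => x) χ)
    (hP : ∀ k, Ppot η k ≤ Ppot χ k) {f : ℝ → ℝ} (hf : ConvexOn ℝ univ f) (hanti : Antitone f)
    (hfη : Integrable f η) (hfχ : Integrable f χ) :
    ∫ x, max (f x) 0 ∂η ≤ ∫ x, max (f x) 0 ∂χ := by
  obtain ⟨l, c, hle, hsup⟩ :=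
    hf.real_univ_sSup_of_nat_affine_eq (convex_continuous hf).lowerSemicontinuous
  have hl : ∀ i x, l i x = l i 1 * x := fun i x => by
    rw [mul_comm, ← smul_eq_mul, ← map_smul, smul_eq_mul, mul_one]
  have hle' : ∀ i x, l i 1 * x + c i ≤ f x := fun i x => by
    have := hle i x
    simpa [← hl] using this
  have hsup' : ∀ x, ⨆ i, (l i 1 * x + c i) = f x := fun x => by
    have := congrFun hsup x
    rw [iSup_apply] at this
    simpa [← hl] using this
  have key := fun n => integral_fold_max_le hη hχ hP (fun i => l i 1) c (Finset.range n) 0 0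
    (fun i _ => slope_nonpos_of_le_antitone hanti (hle' i))
  simp only [sub_zero] at key
  have hlim : ∀ μ : Measure ℝ, Integrable f μ →
      (∀ n, Integrable (fun x => (Finset.range n).fold max 0 fun i => l i 1 * x + c i) μ) →
      Tendsto (fun n => ∫ x, (Finset.range n).fold max 0 (fun i => l i 1 * x + c i) ∂μ) atTop
        (nhds (∫ x, max (f x) 0 ∂μ)) := by
    intro μ hfμ hm
    refine tendsto_integral_of_dominated_convergence (fun x => max (f x) 0)
      (fun n => (hm n).aestronglyMeasurable) hfμ.pos_part (fun n => ?_) ?_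
    · refine .of_forall fun x => ?_
      rw [Real.norm_of_nonneg (by simp [Finset.le_fold_max]), Finset.fold_max_le]
      exact ⟨le_max_right _ _, fun i _ => (hle' i x).trans (le_max_left _ _)⟩
    · exact .of_forall fun x => tendsto_fold_max_range (fun i => hle' i x) (hsup' x)
  exact le_of_tendsto_of_tendsto' (hlim η hfη fun n => (key n).1) (hlim χ hfχ fun n => (key n).2.1)
    fun n => (key n).2.2

lemma leCD_of_Ppot_le {η χ : Measure ℝ} [IsProbabilityMeasure η] [IsProbabilityMeasure χ]
    (hη : Integrable (fun x : ℝ => x) η) (hχ : Integrable (fun x : ℝ => x) χ)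
    (hP : ∀ k, Ppot η k ≤ Ppot χ k) : LeCD η χ := by
  intro f hf hanti hfη hfχ
  have key : ∀ m : ℕ, ∫ x, max (f x) (-m : ℝ) ∂η ≤ ∫ x, max (f x) (-m : ℝ) ∂χ := by
    intro m
    have h := integral_posPart_le_of_Ppot_le hη hχ hP (hf.add_const (m : ℝ))
      (hanti.add_const (m : ℝ)) (hfη.add (integrable_const _)) (hfχ.add (integrable_const _))
    have e : ∀ x, max (f x) (-m : ℝ) = max (f x + m) 0 - m := fun x => by
      rw [← max_sub_sub_right]; simp
    have hη' : Integrable (fun x => max (f x + m) 0) η := (hfη.add (integrable_const _)).pos_part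
    have hχ' : Integrable (fun x => max (f x + m) 0) χ := (hfχ.add (integrable_const _)).pos_part
    simp only [e]
    rw [integral_sub hη' (integrable_const _), integral_sub hχ' (integrable_const _)]
    simpa using h
  have hlim : ∀ μ : Measure ℝ, Integrable f μ →
      Tendsto (fun m : ℕ => ∫ x, max (f x) (-m : ℝ) ∂μ) atTop (nhds (∫ x, f x ∂μ)) := by
    intro μ hfμ
    refine tendsto_integral_of_dominated_convergence (fun x => |f x|)
      (fun n => hfμ.aestronglyMeasurable.sup aestronglyMeasurable_const) hfμ.abs (fun n => ?_) ?_
    · refine .of_forall fun x => ?_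
      rw [Real.norm_eq_abs, abs_le]
      have : (0 : ℝ) ≤ n := n.cast_nonneg
      exact ⟨(neg_abs_le _).trans (le_max_left _ _),
        max_le (le_abs_self _) (by linarith [abs_nonneg (f x)])⟩
    · refine .of_forall fun x => tendsto_const_nhds.congr' ?_
      filter_upwards [eventually_ge_atTop ⌈-f x⌉₊] with n hn
      rw [max_eq_left]
      have := (Nat.le_ceil (-f x)).trans (Nat.cast_le.2 hn)
      linarith
  exact le_of_tendsto_of_tendsto' (hlim η hfη) (hlim χ hfχ) key

lemma Ppot_le_of_leCD {η χ : Measure ℝ} [IsFiniteMeasure η] [IsFiniteMeasure χ]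
    (hη : Integrable (fun x : ℝ => x) η) (hχ : Integrable (fun x : ℝ => x) χ)
    (h : LeCD η χ) (k : ℝ) : Ppot η k ≤ Ppot χ k := by
  refine h _ ?_ ?_ (integrable_put hη k) (integrable_put hχ k)
  · exact ((convexOn_const k convex_univ).sub (concaveOn_id convex_univ)).sup
      (convexOn_const 0 convex_univ)
  · intro x y hxy
    exact max_le_max_right 0 (by linarith)

lemma Ppot_le_of_coupling {η χ : Measure ℝ} [IsProbabilityMeasure η] [IsProbabilityMeasure χ]
    (hη : Integrable (fun x : ℝ => x) η)
    {π : Measure (ℝ × ℝ)} (h : IsSupermartingaleCoupling η χ π) (k : ℝ) :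
    Ppot η k ≤ Ppot χ k := by
  obtain ⟨hp, h1, h2, hint, hsm⟩ := h
  have hB := hsm (Iio k) measurableSet_Iio
  have hmass : π.real (Iio k ×ˢ univ) = η.real (Iio k) := by
    rw [← h1, measureReal_def, measureReal_def, Measure.map_apply measurable_fst measurableSet_Iio,
      prod_univ]
  calc Ppot η k = ∫ x in Iio k, (k - x) ∂η := by
        rw [Ppot, ← integral_indicator measurableSet_Iio]
        congr 1
        ext x
        by_cases hx : x < k
        · simp [hx, hx.le]
        · simp [hx, not_lt.1 hx]
    _ = k * η.real (Iio k) - ∫ x in Iio k, x ∂η := by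
        rw [integral_sub (integrable_const k).integrableOn hη.integrableOn]
        simp [mul_comm]
    _ ≤ k * π.real (Iio k ×ˢ univ) - ∫ p in Iio k ×ˢ univ, (p : ℝ × ℝ).2 ∂π := by
        rw [hmass]; linarith
    _ = ∫ p in Iio k ×ˢ univ, (k - (p : ℝ × ℝ).2) ∂π := by
        rw [integral_sub (integrable_const k).integrableOn hint.integrableOn]
        simp [mul_comm]
    _ ≤ ∫ p in Iio k ×ˢ univ, max (k - (p : ℝ × ℝ).2) 0 ∂π := by
        have i1 := (integrable_const k).sub hint
        exact integral_mono i1.integrableOn i1.pos_part.integrableOn fun p => le_max_left _ _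
    _ ≤ ∫ p, max (k - (p : ℝ × ℝ).2) 0 ∂π :=
        setIntegral_le_integral ((integrable_const k).sub hint).pos_part
          (.of_forall fun p => le_max_right _ _)
    _ = Ppot χ k := by
        rw [Ppot, ← h2, integral_map measurable_snd.aemeasurable]
        exact (by fun_prop : Measurable fun y : ℝ => max (k - y) 0).aestronglyMeasurable

lemma duality_nonneg {η χ : Measure ℝ} (h : LeCD η χ) {φ ψ θ : ℝ → ℝ}
    (hφη : Integrable φ η) (hφχ : Integrable φ χ) (hψη : Integrable ψ η) (hψχ : Integrable ψ χ)
    (hθ : ∀ x, 0 ≤ θ x) (hpos : ∀ x y, 0 ≤ φ x + ψ y + θ x * (y - x)) :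
    0 ≤ ∫ x, φ x ∂η + ∫ y, ψ y ∂χ := by
  set g : ℝ → ℝ := fun y => ⨆ x, (-φ x - θ x * (y - x)) with hg
  have hbdd : ∀ y, BddAbove (range fun x => -φ x - θ x * (y - x)) := fun y =>
    ⟨ψ y, by rintro _ ⟨x, rfl⟩; have := hpos x y; simp only; linarith⟩
  have hle : ∀ y, g y ≤ ψ y := fun y => ciSup_le fun x => by have := hpos x y; linarith
  have hge : ∀ x y, -φ x - θ x * (y - x) ≤ g y := fun x y => le_ciSup (hbdd y) x
  have hge' : ∀ y, -φ y ≤ g y := fun y => by simpa using hge y y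
  have hconv : ConvexOn ℝ univ g := by
    refine ⟨convex_univ, fun y _ z _ a b ha hb hab => ciSup_le fun x => ?_⟩
    have h1 := mul_le_mul_of_nonneg_left (hge x y) ha
    have h2 := mul_le_mul_of_nonneg_left (hge x z) hb
    simp only [smul_eq_mul]
    have h3 : -φ x - θ x * (a * y + b * z - x) =
        a * (-φ x - θ x * (y - x)) + b * (-φ x - θ x * (z - x)) := by
      obtain rfl : b = 1 - a := by linarith
      ring
    linarith
  have hanti : Antitone g := fun y z hyz => ciSup_le fun x => by
    have h1 := hge x y
    have h2 := mul_le_mul_of_nonneg_left hyz (hθ x)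
    linarith
  have hint : ∀ μ : Measure ℝ, Integrable φ μ → Integrable ψ μ → Integrable g μ := by
    intro μ h1 h2
    refine (h1.abs.add h2.abs).mono' (convex_continuous hconv).aestronglyMeasurable ?_
    refine .of_forall fun x => ?_
    rw [Real.norm_eq_abs, abs_le]
    simp only [Pi.add_apply]
    constructor
    · linarith [hge' x, le_abs_self (φ x), abs_nonneg (ψ x)]
    · linarith [hle x, le_abs_self (ψ x), abs_nonneg (φ x)]
  have h1 : ∫ x, -φ x ∂η ≤ ∫ x, g x ∂η := integral_mono hφη.neg (hint η hφη hψη) hge'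
  have h2 := h g hconv hanti (hint η hφη hψη) (hint χ hφχ hψχ)
  have h3 : ∫ x, g x ∂χ ≤ ∫ x, ψ x ∂χ := integral_mono (hint χ hφχ hψχ) hψχ hle
  rw [integral_neg] at h1
  linarith

/-- Functions on the plane of at most linear growth. -/
def linearGrowth : Submodule ℝ (ℝ × ℝ → ℝ) where
  carrier := {h | ∃ C, ∀ p, |h p| ≤ C * (1 + ‖p‖)}
  zero_mem' := ⟨0, by simp⟩
  add_mem' := by
    rintro f g ⟨C, hC⟩ ⟨D, hD⟩
    refine ⟨C + D, fun p => (abs_add_le _ _).trans ?_⟩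
    linarith [hC p, hD p]
  smul_mem' := by
    rintro c f ⟨C, hC⟩
    refine ⟨|c| * C, fun p => ?_⟩
    simp only [Pi.smul_apply, smul_eq_mul, abs_mul, mul_assoc]
    exact mul_le_mul_of_nonneg_left (hC p) (abs_nonneg c)

lemma linearGrowth_bound {h : ℝ × ℝ → ℝ} (hh : h ∈ linearGrowth) :
    ∃ C, 0 ≤ C ∧ ∀ p, |h p| ≤ C * (1 + ‖p‖) := by
  obtain ⟨C, hC⟩ := hh
  refine ⟨|C|, abs_nonneg C, fun p => (hC p).trans ?_⟩
  gcongr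
  exact le_abs_self C

lemma norm_mk_le_abs_add_abs (x y : ℝ) : ‖(x, y)‖ ≤ |x| + |y| := by
  rw [Prod.norm_mk, Real.norm_eq_abs, Real.norm_eq_abs]
  exact max_le (by linarith [abs_nonneg y]) (by linarith [abs_nonneg x])

/-- `φ`, `ψ` and `θ` witness that `h` can be superhedged at price `t`. -/
structure Superhedge (η χ : Measure ℝ) (h : ℝ × ℝ → ℝ) (t : ℝ) (φ ψ θ : ℝ → ℝ) : Prop where
  fst_left : Integrable φ η
  fst_right : Integrable φ χ
  snd_left : Integrable ψ η
  snd_right : Integrable ψ χ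
  nonneg : ∀ x, 0 ≤ θ x
  le : ∀ x y, h (x, y) ≤ φ x + ψ y + θ x * (y - x)
  price : ∫ x, φ x ∂η + ∫ y, ψ y ∂χ = t

/-- The cone of pairs `(h, t)` such that `h` can be superhedged at price `t`. -/
def superhedgeCone (η χ : Measure ℝ) : PointedCone ℝ (linearGrowth × ℝ) where
  carrier := {q | ∃ φ ψ θ, Superhedge η χ q.1 q.2 φ ψ θ}
  zero_mem' := ⟨0, 0, 0, by constructor <;> simp⟩
  add_mem' := by
    rintro ⟨h, t⟩ ⟨h', t'⟩ ⟨φ, ψ, θ, H⟩ ⟨φ', ψ', θ', H'⟩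
    refine ⟨φ + φ', ψ + ψ', θ + θ', H.1.add H'.1, H.2.add H'.2, H.3.add H'.3, H.4.add H'.4,
      fun x => add_nonneg (H.5 x) (H'.5 x), fun x y => ?_, ?_⟩
    · have h1 := H.6 x y
      have h2 := H'.6 x y
      simp only [Prod.mk_add_mk, Submodule.coe_add, Pi.add_apply] at *
      linarith
    · have h1 := H.7
      have h2 := H'.7
      simp only [Pi.add_apply, Prod.mk_add_mk] at *
      rw [integral_add H.1 H'.1, integral_add H.4 H'.4]
      linarith
  smul_mem' := by
    rintro ⟨c, hc⟩ ⟨h, t⟩ ⟨φ, ψ, θ, H⟩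
    refine ⟨c • φ, c • ψ, c • θ, H.1.smul c, H.2.smul c, H.3.smul c, H.4.smul c,
      fun x => mul_nonneg hc (H.5 x), fun x y => ?_, ?_⟩
    · have h1 := mul_le_mul_of_nonneg_left (H.6 x y) hc
      have h2 : (((⟨c, hc⟩ : {c : ℝ // 0 ≤ c}) • h : linearGrowth) : ℝ × ℝ → ℝ) (x, y) =
        c * (h : ℝ × ℝ → ℝ) (x, y) := rfl
      simp only [Prod.smul_mk, Pi.smul_apply, smul_eq_mul] at *
      rw [h2]
      linarith
    · have h1 := H.7
      simp only [Pi.smul_apply, smul_eq_mul, integral_const_mul] at *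
      rw [← mul_add, h1]
      rfl

lemma exists_superhedge {η χ : Measure ℝ} [IsFiniteMeasure η] [IsFiniteMeasure χ]
    (hη : Integrable (fun x : ℝ => x) η) (hχ : Integrable (fun x : ℝ => x) χ)
    {h : ℝ × ℝ → ℝ} {C : ℝ} (hC0 : 0 ≤ C) (hC : ∀ p, h p ≤ C * (1 + ‖p‖)) :
    Superhedge η χ h (∫ x, C * (1 + |x|) ∂η + ∫ y, C * |y| ∂χ)
      (fun x => C * (1 + |x|)) (fun y => C * |y|) 0 where
  fst_left := ((integrable_const _).add hη.abs).const_mul _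
  fst_right := ((integrable_const _).add hχ.abs).const_mul _
  snd_left := hη.abs.const_mul _
  snd_right := hχ.abs.const_mul _
  nonneg _ := le_rfl
  le x y := by
    have := mul_le_mul_of_nonneg_left (norm_mk_le_abs_add_abs x y) hC0
    simp only [Pi.zero_apply]
    linarith [hC (x, y)]
  price := rfl

/-- `Λ` is dominated by the superhedging price. -/
def IsDominated (η χ : Measure ℝ) (Λ : linearGrowth →ₗ[ℝ] ℝ) : Prop :=
  ∀ (f : linearGrowth) (t : ℝ) (φ ψ θ : ℝ → ℝ), Superhedge η χ f t φ ψ θ → Λ f ≤ t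

lemma exists_functional {η χ : Measure ℝ} [IsFiniteMeasure η] [IsFiniteMeasure χ]
    (hη : Integrable (fun x : ℝ => x) η) (hχ : Integrable (fun x : ℝ => x) χ)
    (h : LeCD η χ) :
    ∃ Λ, IsDominated η χ Λ := by
  let F : (linearGrowth × ℝ) →ₗ.[ℝ] ℝ :=
    { domain := Submodule.prod ⊥ ⊤
      toFun := (LinearMap.snd ℝ linearGrowth ℝ).domRestrict _ }
  obtain ⟨G, hG, hGs⟩ := riesz_extension (superhedgeCone η χ) F (by
    rintro ⟨⟨f, t⟩, hf⟩ ⟨φ, ψ, θ, H⟩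
    obtain rfl : f = 0 := hf.1
    change 0 ≤ t
    rw [← show _ = t from H.price]
    exact duality_nonneg h H.1 H.2 H.3 H.4 H.5 H.6) (by
    rintro ⟨f, r⟩
    obtain ⟨C, hC0, hC⟩ := linearGrowth_bound f.2
    have H := exists_superhedge hη hχ hC0 fun p => (le_abs_self _).trans (hC p)
    refine ⟨⟨(0, (∫ x, C * (1 + |x|) ∂η + ∫ y, C * |y| ∂χ) - r), ⟨rfl, trivial⟩⟩,
      fun x => C * (1 + |x|), fun y => C * |y|, 0, ?_⟩
    · simpa using H)
  have h1 : ∀ t : ℝ, G (0, t) = t := fun t => hG ⟨(0, t), ⟨rfl, trivial⟩⟩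
  refine ⟨-(G ∘ₗ LinearMap.inl ℝ _ _), fun f t φ ψ θ H => ?_⟩
  have h2 := hGs (f, t) ⟨φ, ψ, θ, H⟩
  have h3 : G (f, t) = G (f, 0) + G (0, t) := by rw [← map_add]; simp
  rw [h3, h1] at h2
  simp only [LinearMap.neg_apply, LinearMap.comp_apply, LinearMap.inl_apply]
  linarith

/-- A continuous compactly supported function equal to `1` on the ball of radius `n`. -/
def cutoff (n : ℕ) (p : ℝ × ℝ) : ℝ := max 0 (min 1 (n + 1 - ‖p‖))

lemma continuous_cutoff (n : ℕ) : Continuous (cutoff n) := by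
  unfold cutoff
  fun_prop

lemma cutoff_nonneg (n : ℕ) (p : ℝ × ℝ) : 0 ≤ cutoff n p := le_max_left _ _

lemma cutoff_le_one (n : ℕ) (p : ℝ × ℝ) : cutoff n p ≤ 1 :=
  max_le zero_le_one (min_le_left _ _)

lemma cutoff_eq_one {n : ℕ} {p : ℝ × ℝ} (h : ‖p‖ ≤ n) : cutoff n p = 1 := by
  rw [cutoff, min_eq_left (by linarith), max_eq_right zero_le_one]

lemma hasCompactSupport_cutoff (n : ℕ) : HasCompactSupport (cutoff n) := by
  refine HasCompactSupport.intro (isCompact_closedBall (0 : ℝ × ℝ) (n + 1)) fun p hp => ?_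
  rw [mem_closedBall_zero_iff, not_le] at hp
  exact max_eq_left ((min_le_right _ _).trans (by linarith))

lemma abs_mul_cutoff_le (h : ℝ × ℝ → ℝ) (n : ℕ) (p : ℝ × ℝ) : |h p * cutoff n p| ≤ |h p| := by
  rw [abs_mul, abs_of_nonneg (cutoff_nonneg n p)]
  exact mul_le_of_le_one_right (abs_nonneg _) (cutoff_le_one n p)

lemma mul_cutoff_mem {h : ℝ × ℝ → ℝ} (hh : h ∈ linearGrowth) (n : ℕ) :
    (fun p => h p * cutoff n p) ∈ linearGrowth := by
  obtain ⟨C, hC⟩ := hh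
  exact ⟨C, fun p => (abs_mul_cutoff_le h n p).trans (hC p)⟩

lemma eventually_mul_cutoff (h : ℝ × ℝ → ℝ) (p : ℝ × ℝ) :
    ∀ᶠ n : ℕ in atTop, h p * cutoff n p = h p := by
  obtain ⟨N, hN⟩ := exists_nat_ge ‖p‖
  filter_upwards [eventually_ge_atTop N] with n hn
  rw [cutoff_eq_one (hN.trans (by exact_mod_cast hn)), mul_one]

lemma mem_linearGrowth_of_bound {h : ℝ × ℝ → ℝ} {C : ℝ} (hC : ∀ p, |h p| ≤ C) :
    h ∈ linearGrowth := by
  have h0 : 0 ≤ C := (abs_nonneg _).trans (hC 0)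
  exact ⟨C, fun p => (hC p).trans (le_mul_of_one_le_right h0 (by linarith [norm_nonneg p]))⟩

lemma mem_linearGrowth_of_hasCompactSupport {h : ℝ × ℝ → ℝ} (hc : Continuous h)
    (hs : HasCompactSupport h) : h ∈ linearGrowth := by
  obtain ⟨C, hC⟩ := hs.exists_bound_of_continuous hc
  exact mem_linearGrowth_of_bound hC

/-- The part of `C * (1 + |x|)` outside of the interval `[-n, n]`. -/
def linearTail (C : ℝ) (n : ℕ) : ℝ → ℝ := indicator {x | (n : ℝ) < |x|} fun x => C * (1 + |x|)

lemma measurableSet_lt_abs (n : ℕ) : MeasurableSet {x : ℝ | (n : ℝ) < |x|} :=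
  measurableSet_lt measurable_const measurable_norm

lemma integrable_linearTail {μ : Measure ℝ} [IsFiniteMeasure μ]
    (hμ : Integrable (fun x : ℝ => x) μ) (C : ℝ) (n : ℕ) : Integrable (linearTail C n) μ :=
  (((integrable_const _).add hμ.abs).const_mul _).indicator (measurableSet_lt_abs n)

lemma linearTail_nonneg {C : ℝ} (hC : 0 ≤ C) (n : ℕ) (x : ℝ) : 0 ≤ linearTail C n x :=
  indicator_nonneg (fun _ _ => by positivity) x

lemma tendsto_integral_linearTail {μ : Measure ℝ} [IsFiniteMeasure μ]
    (hμ : Integrable (fun x : ℝ => x) μ) (C : ℝ) :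
    Tendsto (fun n => ∫ x, linearTail C n x ∂μ) atTop (nhds 0) := by
  have hint : Integrable (fun x => C * (1 + |x|)) μ :=
    ((integrable_const _).add hμ.abs).const_mul _
  rw [← integral_zero ℝ ℝ (μ := μ)]
  refine tendsto_integral_of_dominated_convergence _
    (fun n => (integrable_linearTail hμ C n).aestronglyMeasurable) hint.norm
    (fun n => .of_forall fun x => norm_indicator_le_norm_self _ _) (.of_forall fun x => ?_)
  refine tendsto_const_nhds.congr' ?_
  obtain ⟨N, hN⟩ := exists_nat_ge |x|
  filter_upwards [eventually_ge_atTop N] with n hn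
  refine (indicator_of_notMem ?_ _).symm
  exact not_lt.2 (hN.trans (by exact_mod_cast hn))

namespace IsDominated

variable {η χ : Measure ℝ} {Λ : linearGrowth →ₗ[ℝ] ℝ}

lemma nonneg (hΛ : IsDominated η χ Λ) {f : linearGrowth} (hf : ∀ p, 0 ≤ (f : ℝ × ℝ → ℝ) p) :
    0 ≤ Λ f := by
  have H : Superhedge η χ (-f : linearGrowth) 0 0 0 0 :=
    { fst_left := integrable_zero _ _ _
      fst_right := integrable_zero _ _ _
      snd_left := integrable_zero _ _ _
      snd_right := integrable_zero _ _ _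
      nonneg := fun _ => le_rfl
      le := fun x y => by simpa using hf (x, y)
      price := by simp }
  have := hΛ _ _ _ _ _ H
  rw [map_neg] at this
  linarith

lemma exists_measure (hΛ : IsDominated η χ Λ) :
    ∃ π : Measure (ℝ × ℝ), IsFiniteMeasureOnCompacts π ∧
      ∀ (f : ℝ × ℝ → ℝ) (hc : Continuous f) (hs : HasCompactSupport f),
        ∫ p, f p ∂π = Λ ⟨f, mem_linearGrowth_of_hasCompactSupport hc hs⟩ := by
  let L : CompactlySupportedContinuousMap (ℝ × ℝ) ℝ →ₗ[ℝ] ℝ :=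
    { toFun := fun f => Λ ⟨f, mem_linearGrowth_of_hasCompactSupport f.continuous f.hasCompactSupport⟩
      map_add' := fun f g => by rw [← map_add]; rfl
      map_smul' := fun c f => by rw [RingHom.id_apply, ← map_smul]; rfl }
  let P := PositiveLinearMap.mk₀ L fun f hf => hΛ.nonneg hf
  refine ⟨RealRMK.rieszMeasure P, inferInstance, fun f hc hs => ?_⟩
  exact RealRMK.integral_rieszMeasure P ⟨⟨f, hc⟩, hs⟩

variable [IsFiniteMeasure η] [IsFiniteMeasure χ]

lemma sub_le_tail (hΛ : IsDominated η χ Λ) (hη : Integrable (fun x : ℝ => x) η)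
    (hχ : Integrable (fun x : ℝ => x) χ) (f : linearGrowth) {C : ℝ} (hC0 : 0 ≤ C)
    (n : ℕ) (hf : ∀ p, (f : ℝ × ℝ → ℝ) p ≤ C * (1 + ‖p‖))
    (hf0 : ∀ p, ‖p‖ ≤ n → (f : ℝ × ℝ → ℝ) p = 0) :
    Λ f ≤ ∫ x, linearTail C n x ∂η + ∫ y, linearTail C n y ∂χ := by
  refine hΛ f _ (linearTail C n) (linearTail C n) 0 ⟨integrable_linearTail hη C n,
    integrable_linearTail hχ C n, integrable_linearTail hη C n, integrable_linearTail hχ C n,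
    fun _ => le_rfl, fun x y => ?_, rfl⟩
  have hx := linearTail_nonneg hC0 n x
  have hy := linearTail_nonneg hC0 n y
  rw [Pi.zero_apply, zero_mul, add_zero]
  rcases le_or_gt ‖(x, y)‖ n with h | h
  · rw [hf0 _ h]
    positivity
  refine (hf _).trans ?_
  rw [Prod.norm_mk, Real.norm_eq_abs, Real.norm_eq_abs] at h ⊢
  rcases le_total |x| |y| with h' | h'
  · rw [max_eq_right h'] at h ⊢
    have : linearTail C n y = C * (1 + |y|) := indicator_of_mem (s := {x : ℝ | (n : ℝ) < |x|}) h _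
    linarith
  · rw [max_eq_left h'] at h ⊢
    have : linearTail C n x = C * (1 + |x|) := indicator_of_mem (s := {x : ℝ | (n : ℝ) < |x|}) h _
    linarith

lemma tendsto_mul_cutoff (hΛ : IsDominated η χ Λ) (hη : Integrable (fun x : ℝ => x) η)
    (hχ : Integrable (fun x : ℝ => x) χ) {h : ℝ × ℝ → ℝ} (hh : h ∈ linearGrowth) :
    Tendsto (fun n => Λ ⟨_, mul_cutoff_mem hh n⟩) atTop (nhds (Λ ⟨h, hh⟩)) := by
  obtain ⟨C, hC0, hC⟩ := linearGrowth_bound hh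
  have hT := (tendsto_integral_linearTail hη (2 * C)).add (tendsto_integral_linearTail hχ (2 * C))
  rw [add_zero] at hT
  rw [tendsto_iff_norm_sub_tendsto_zero]
  refine squeeze_zero (fun _ => norm_nonneg _) (fun n => ?_) hT
  have hb : ∀ p, |h p * cutoff n p - h p| ≤ 2 * C * (1 + ‖p‖) := fun p =>
    (abs_sub _ _).trans (by linarith [abs_mul_cutoff_le h n p, hC p])
  rw [Real.norm_eq_abs, abs_le', ← map_sub, ← map_neg]
  constructor
  · refine hΛ.sub_le_tail hη hχ _ (by positivity) n (fun p => (le_abs_self _).trans (hb p)) ?_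
    intro p hp
    simp [cutoff_eq_one hp]
  · refine hΛ.sub_le_tail hη hχ _ (by positivity) n (fun p => (neg_le_abs _).trans (hb p)) ?_
    intro p hp
    simp [cutoff_eq_one hp]

lemma mul_cutoff_integral {π : Measure (ℝ × ℝ)}
    (hπ : ∀ (f : ℝ × ℝ → ℝ) (hc : Continuous f) (hs : HasCompactSupport f),
      ∫ p, f p ∂π = Λ ⟨f, mem_linearGrowth_of_hasCompactSupport hc hs⟩)
    {h : ℝ × ℝ → ℝ} (hc : Continuous h) (hh : h ∈ linearGrowth) (n : ℕ) :
    ∫ p, h p * cutoff n p ∂π = Λ ⟨_, mul_cutoff_mem hh n⟩ :=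
  hπ _ (hc.mul (continuous_cutoff n)) (hasCompactSupport_cutoff n).mul_left

lemma integrable_one_add_norm (hΛ : IsDominated η χ Λ) (hη : Integrable (fun x : ℝ => x) η)
    (hχ : Integrable (fun x : ℝ => x) χ) {π : Measure (ℝ × ℝ)} [IsFiniteMeasureOnCompacts π]
    (hπ : ∀ (f : ℝ × ℝ → ℝ) (hc : Continuous f) (hs : HasCompactSupport f),
      ∫ p, f p ∂π = Λ ⟨f, mem_linearGrowth_of_hasCompactSupport hc hs⟩) :
    Integrable (fun p : ℝ × ℝ => 1 + ‖p‖) π := by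
  have hc : Continuous fun p : ℝ × ℝ => 1 + ‖p‖ := by fun_prop
  have h0 : ∀ p : ℝ × ℝ, 0 ≤ 1 + ‖p‖ := fun p => by positivity
  have hmem : (fun p : ℝ × ℝ => 1 + ‖p‖) ∈ linearGrowth :=
    ⟨1, fun p => by rw [one_mul, abs_of_nonneg (h0 p)]⟩
  refine (aecover_closedBall (μ := π) (x := (0 : ℝ × ℝ))
    tendsto_natCast_atTop_atTop).integrable_of_integral_bounded_of_nonneg_ae
    (∫ x, 1 * (1 + |x|) ∂η + ∫ y, 1 * |y| ∂χ)
    (fun n => hc.continuousOn.integrableOn_compact (isCompact_closedBall _ _))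
    (.of_forall h0) (.of_forall fun n => ?_)
  have hi : Integrable (fun p => (1 + ‖p‖) * cutoff n p) π :=
    (hc.mul (continuous_cutoff n)).integrable_of_hasCompactSupport
      (hasCompactSupport_cutoff n).mul_left
  calc ∫ p in Metric.closedBall 0 (n : ℝ), (1 + ‖p‖) ∂π
      = ∫ p in Metric.closedBall 0 (n : ℝ), (1 + ‖p‖) * cutoff n p ∂π :=
        setIntegral_congr_fun Metric.isClosed_closedBall.measurableSet fun p hp => by
          simp only [cutoff_eq_one (mem_closedBall_zero_iff.1 hp), mul_one]
    _ ≤ ∫ p, (1 + ‖p‖) * cutoff n p ∂π :=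
        setIntegral_le_integral hi (.of_forall fun p => mul_nonneg (h0 p) (cutoff_nonneg n p))
    _ = Λ ⟨_, mul_cutoff_mem hmem n⟩ := mul_cutoff_integral hπ hc hmem n
    _ ≤ _ := hΛ _ _ _ _ _ (exists_superhedge hη hχ zero_le_one fun p => by
        rw [one_mul]
        exact mul_le_of_le_one_right (h0 p) (cutoff_le_one n p))

lemma integral_eq (hΛ : IsDominated η χ Λ) (hη : Integrable (fun x : ℝ => x) η)
    (hχ : Integrable (fun x : ℝ => x) χ) {π : Measure (ℝ × ℝ)} [IsFiniteMeasureOnCompacts π]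
    (hπ : ∀ (f : ℝ × ℝ → ℝ) (hc : Continuous f) (hs : HasCompactSupport f),
      ∫ p, f p ∂π = Λ ⟨f, mem_linearGrowth_of_hasCompactSupport hc hs⟩)
    {h : ℝ × ℝ → ℝ} (hc : Continuous h) (hh : h ∈ linearGrowth) :
    ∫ p, h p ∂π = Λ ⟨h, hh⟩ := by
  obtain ⟨C, -, hC⟩ := linearGrowth_bound hh
  refine tendsto_nhds_unique ?_ (hΛ.tendsto_mul_cutoff hη hχ hh)
  simp only [← mul_cutoff_integral hπ hc hh]
  refine tendsto_integral_of_dominated_convergence (fun p => C * (1 + ‖p‖))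
    (fun n => (hc.mul (continuous_cutoff n)).aestronglyMeasurable)
    ((hΛ.integrable_one_add_norm hη hχ hπ).const_mul C)
    (fun n => .of_forall fun p => (abs_mul_cutoff_le h n p).trans (hC p))
    (.of_forall fun p => ?_)
  exact tendsto_const_nhds.congr' ((eventually_mul_cutoff h p).mono fun n hn => hn.symm)

end IsDominated

lemma setIntegral_nonpos_of_isClosed {π : Measure (ℝ × ℝ)} {g : ℝ × ℝ → ℝ}
    (hg : Integrable g π)
    (h : ∀ θ : ℝ → ℝ, Continuous θ → (∀ x, 0 ≤ θ x) → (∀ x, θ x ≤ 1) →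
      ∫ p, θ p.1 * g p ∂π ≤ 0)
    {F : Set ℝ} (hF : IsClosed F) : ∫ p in Prod.fst ⁻¹' F, g p ∂π ≤ 0 := by
  rw [← integral_indicator (measurable_fst hF.measurableSet)]
  refine le_of_tendsto (x := atTop) (f := fun n : ℕ => ∫ p, (hF.apprSeq n p.1 : ℝ) * g p ∂π)
    ?_ (.of_forall fun n => h (fun x => hF.apprSeq n x) ?_ (fun x => NNReal.coe_nonneg _) fun x => ?_)
  · refine tendsto_integral_of_dominated_convergence (fun p => ‖g p‖) (fun n => ?_) hg.norm
      (fun n => .of_forall fun p => ?_) (.of_forall fun p => ?_)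
    · refine Continuous.aestronglyMeasurable ?_ |>.mul hg.aestronglyMeasurable
      fun_prop
    · rw [norm_mul, NNReal.norm_eq]
      exact mul_le_of_le_one_left (norm_nonneg _)
        (by exact_mod_cast HasOuterApproxClosed.apprSeq_apply_le_one hF n p.1)
    · have := tendsto_pi_nhds.1 (HasOuterApproxClosed.tendsto_apprSeq hF) p.1
      have := (NNReal.tendsto_coe.2 this).mul_const (g p)
      convert this using 2
      by_cases hp : p.1 ∈ F <;> simp [indicator, hp]
  · fun_prop
  · exact_mod_cast HasOuterApproxClosed.apprSeq_apply_le_one hF n x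

lemma setIntegral_nonpos_of_forall_isClosed {π : Measure (ℝ × ℝ)} {g : ℝ × ℝ → ℝ}
    (hg : Integrable g π)
    (h : ∀ F : Set ℝ, IsClosed F → ∫ p in Prod.fst ⁻¹' F, g p ∂π ≤ 0)
    {B : Set ℝ} (hB : MeasurableSet B) : ∫ p in Prod.fst ⁻¹' B, g p ∂π ≤ 0 := by
  set ρ : Measure ℝ := (π.withDensity fun p => ‖g p‖ₑ).map Prod.fst
  have : IsFiniteMeasure (π.withDensity fun p => ‖g p‖ₑ) :=
    isFiniteMeasure_withDensity hg.hasFiniteIntegral.ne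
  refine le_of_forall_pos_le_add fun ε hε => ?_
  obtain ⟨F, hFB, hF, hlt⟩ := hB.exists_isClosed_sdiff_lt (μ := ρ) (measure_ne_top _ _)
    (ENNReal.ofReal_pos.2 hε).ne'
  have hd : MeasurableSet (B \ F) := hB.diff hF.measurableSet
  have hsplit : ∫ p in Prod.fst ⁻¹' B, g p ∂π =
      ∫ p in Prod.fst ⁻¹' F, g p ∂π + ∫ p in Prod.fst ⁻¹' (B \ F), g p ∂π := by
    rw [← setIntegral_union (disjoint_sdiff_right.preimage _) (measurable_fst hd) hg.integrableOn
      hg.integrableOn, ← preimage_union, union_sdiff_cancel hFB]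
  rw [Measure.map_apply measurable_fst hd, withDensity_apply _ (measurable_fst hd)] at hlt
  have hle : ∫ p in Prod.fst ⁻¹' (B \ F), g p ∂π ≤ ε := by
    refine (Real.le_norm_self _).trans ((norm_integral_le_integral_norm _).trans ?_)
    rw [integral_norm_eq_lintegral_enorm hg.aestronglyMeasurable.restrict]
    exact ENNReal.toReal_le_of_le_ofReal hε.le hlt.le
  linarith [h F hF]

lemma exists_coupling_of_leCD {η χ : Measure ℝ} [IsProbabilityMeasure η] [IsProbabilityMeasure χ]
    (hη : Integrable (fun x : ℝ => x) η) (hχ : Integrable (fun x : ℝ => x) χ) (h : LeCD η χ) :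
    ∃ π, IsSupermartingaleCoupling η χ π := by
  obtain ⟨Λ, hΛ⟩ := exists_functional hη hχ h
  obtain ⟨π, _, hπ⟩ := hΛ.exists_measure
  have hw := hΛ.integrable_one_add_norm hη hχ hπ
  have : IsFiniteMeasure π := by
    refine (integrable_const_iff_isFiniteMeasure (one_ne_zero (α := ℝ))).1 ?_
    refine hw.mono' aestronglyMeasurable_const (.of_forall fun p => ?_)
    simp
  have h1 : Integrable (fun p : ℝ × ℝ => p.1) π :=
    hw.mono' continuous_fst.aestronglyMeasurable (.of_forall fun p => by
      linarith [norm_fst_le p])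
  have h2 : Integrable (fun p : ℝ × ℝ => p.2) π :=
    hw.mono' continuous_snd.aestronglyMeasurable (.of_forall fun p => by
      linarith [norm_snd_le p])
  have hle : ∀ {f : ℝ × ℝ → ℝ} {t : ℝ} {φ ψ θ : ℝ → ℝ}, Continuous f → f ∈ linearGrowth →
      Superhedge η χ f t φ ψ θ → ∫ p, f p ∂π ≤ t := fun hc hf H =>
    (hΛ.integral_eq hη hχ hπ hc hf).trans_le (hΛ ⟨_, hf⟩ _ _ _ _ H)
  have hfst : ∀ φ : BoundedContinuousFunction ℝ ℝ, ∫ p, φ p.1 ∂π ≤ ∫ x, φ x ∂η := fun φ =>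
    hle (φ := φ) (ψ := 0) (θ := 0) (by fun_prop)
      (mem_linearGrowth_of_bound fun p => φ.norm_coe_le_norm p.1)
      ⟨φ.integrable η, φ.integrable χ, integrable_zero _ _ _, integrable_zero _ _ _,
        fun _ => le_rfl, fun _ _ => by simp, by simp⟩
  have hsnd : ∀ ψ : BoundedContinuousFunction ℝ ℝ, ∫ p, ψ p.2 ∂π ≤ ∫ y, ψ y ∂χ := fun ψ =>
    hle (φ := 0) (ψ := ψ) (θ := 0) (by fun_prop)
      (mem_linearGrowth_of_bound fun p => ψ.norm_coe_le_norm p.2)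
      ⟨integrable_zero _ _ _, integrable_zero _ _ _, ψ.integrable η, ψ.integrable χ,
        fun _ => le_rfl, fun _ _ => by simp, by simp⟩
  have hπ1 : π.map Prod.fst = η := ext_of_forall_integral_eq_of_IsFiniteMeasure fun φ => by
    rw [integral_map measurable_fst.aemeasurable φ.continuous.aestronglyMeasurable]
    refine le_antisymm (hfst φ) ?_
    have := hfst (-φ)
    simp only [BoundedContinuousFunction.coe_neg, Pi.neg_apply, integral_neg] at this
    linarith
  have hπ2 : π.map Prod.snd = χ := ext_of_forall_integral_eq_of_IsFiniteMeasure fun ψ => by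
    rw [integral_map measurable_snd.aemeasurable ψ.continuous.aestronglyMeasurable]
    refine le_antisymm (hsnd ψ) ?_
    have := hsnd (-ψ)
    simp only [BoundedContinuousFunction.coe_neg, Pi.neg_apply, integral_neg] at this
    linarith
  have hdrift : ∀ B : Set ℝ, MeasurableSet B → ∫ p in Prod.fst ⁻¹' B, (p.2 - p.1) ∂π ≤ 0 := by
    intro B hB
    refine setIntegral_nonpos_of_forall_isClosed (h2.sub h1) (fun F hF =>
      setIntegral_nonpos_of_isClosed (h2.sub h1) (fun θ hc hθ0 hθ1 => ?_) hF) hB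
    refine hle (φ := 0) (ψ := 0) (θ := θ) (by fun_prop) ⟨2, fun p => ?_⟩
      ⟨integrable_zero _ _ _, integrable_zero _ _ _, integrable_zero _ _ _, integrable_zero _ _ _,
        hθ0, fun _ _ => by simp, by simp⟩
    rw [abs_mul, abs_of_nonneg (hθ0 _)]
    have h3 : |p.2| ≤ ‖p‖ := norm_snd_le p
    have h4 : |p.1| ≤ ‖p‖ := norm_fst_le p
    calc θ p.1 * |p.2 - p.1| ≤ |p.2 - p.1| := mul_le_of_le_one_left (abs_nonneg _) (hθ1 _)
      _ ≤ |p.2| + |p.1| := abs_sub _ _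
      _ ≤ 2 * (1 + ‖p‖) := by linarith
  refine ⟨π, ⟨?_⟩, hπ1, hπ2, h2, fun B hB => ?_⟩
  · rw [← measure_univ (μ := η), ← hπ1, Measure.map_apply measurable_fst .univ, preimage_univ]
  · have h5 := hdrift B hB
    rw [integral_sub h2.integrableOn h1.integrableOn] at h5
    rw [prod_univ, ← hπ1, setIntegral_map (f := fun x : ℝ => x) hB aestronglyMeasurable_id
      measurable_fst.aemeasurable]
    linarith

/-- Lemma 2.1: equivalence of the convex-decreasing order, the pointwise ordering
of the potentials `P`, and the existence of a supermartingale coupling. -/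
theorem leCD_iff_potential_iff_coupling
    (η χ : MeasureTheory.Measure ℝ)
    [MeasureTheory.IsProbabilityMeasure η] [MeasureTheory.IsProbabilityMeasure χ]
    (hη : MeasureTheory.Integrable (fun x : ℝ => x) η)
    (hχ : MeasureTheory.Integrable (fun x : ℝ => x) χ) :
    (LeCD η χ ↔ ∀ k : ℝ, Ppot η k ≤ Ppot χ k) ∧
    (LeCD η χ ↔ ∃ π : MeasureTheory.Measure (ℝ × ℝ),
      IsSupermartingaleCoupling η χ π) := by
  exact ⟨⟨fun h k => Ppot_le_of_leCD hη hχ h k, leCD_of_Ppot_le hη hχ⟩,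
    exists_coupling_of_leCD hη hχ,
    fun ⟨_, hπ⟩ => leCD_of_Ppot_le hη hχ fun k => Ppot_le_of_coupling hη hπ k⟩
end
end

section
/- Let μ₁, μ₂, ν ∈ 𝓜 with μ₁ + μ₂ ≤_pcd ν. Let S₁ be a shadow of μ₁ in ν, and let ν' ∈ 𝓜 satisfy S₁ + ν' = ν. Then μ₂ ≤_pcd ν'; moreover, if S₂ is a shadow of μ₂ in ν' and S is a shadow of μ₁ + μ₂ in ν, then S = S₁ + S₂. -/
open MeasureTheory Set Filter

noncomputable section

/-- A convex function on `ℝ` vanishing at `-∞` is the potential of a measure, namely of its second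
derivative. -/
lemma exists_lintegral_ofReal_sub_eq {p : ℝ → ℝ} (hp : ConvexOn ℝ univ p)
    (h0 : Tendsto p atBot (nhds 0)) :
    ∃ η : Measure ℝ, SFinite η ∧
      ∀ k, ∫⁻ x, ENNReal.ofReal (k - x) ∂η = ENNReal.ofReal (p k) := by
  have hpc : Continuous p := continuousOn_univ.1 (hp.continuousOn isOpen_univ)
  set G : ℝ → ℝ := fun x => derivWithin p (Ioi x) x with hG
  have hGm : Monotone G := by
    have := hp.monotoneOn_rightDeriv
    rwa [interior_univ, monotoneOn_univ] at this
  have hGd (x : ℝ) : HasDerivWithinAt p (G x) (Ioi x) x :=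
    hp.hasDerivWithinAt_rightDeriv_of_mem_interior (by simp)
  have hGle (x : ℝ) : G x ≤ p (x + 1) - p x := by
    have := hp.rightDeriv_le_slope_of_mem_interior (x := x) (y := x + 1) (by simp) (mem_univ _)
      (by linarith)
    simpa [slope_def_field] using this
  have hGge (x : ℝ) : p x - p (x - 1) ≤ G x := by
    have h1 := hp.slope_le_leftDeriv_of_mem_interior (x := x - 1) (y := x) (mem_univ _) (by simp)
      (by linarith)
    have h2 := hp.leftDeriv_le_rightDeriv_of_mem_interior (x := x) (by simp)
    simpa [slope_def_field] using h1.trans h2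
  have hG0 : Tendsto G atBot (nhds 0) := by
    refine tendsto_of_tendsto_of_tendsto_of_le_of_le
      (g := fun x => p x - p (x - 1)) (h := fun x => p (x + 1) - p x) ?_ ?_ hGge hGle
    · simpa [← sub_eq_add_neg] using
        h0.sub (h0.comp (tendsto_atBot_add_const_right atBot (-1 : ℝ) tendsto_id))
    · simpa using (h0.comp (tendsto_atBot_add_const_right atBot (1 : ℝ) tendsto_id)).sub h0
  have hGnn (x : ℝ) : 0 ≤ G x := hGm.le_of_tendsto hG0 x
  set F := hGm.stieltjesFunction with hF
  have hFG : ∀ᵐ x, F x = G x := by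
    have hc : {x | ¬ ContinuousAt G x}.Countable := hGm.countable_not_continuousAt
    have := hc.ae_notMem volume
    filter_upwards [this] with x hx
    rw [hF, hGm.stieltjesFunction_eq]
    have hx : ContinuousAt G x := not_not.1 hx
    exact (hGm.continuousWithinAt_Ioi_iff_rightLim_eq).1 hx.continuousWithinAt
  have hF0 : Tendsto F atBot (nhds 0) := by
    refine tendsto_of_tendsto_of_tendsto_of_le_of_le (g := G) (h := fun x => G (x + 1)) hG0
      (hG0.comp (tendsto_atBot_add_const_right atBot (1 : ℝ) tendsto_id)) ?_ ?_
    · intro x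
      exact hGm.le_rightLim le_rfl
    · intro x
      exact hGm.rightLim_le (by linarith)
  refine ⟨F.measure, inferInstance, fun k => ?_⟩
  have hlc : ∫⁻ x, ENNReal.ofReal (k - x) ∂F.measure
      = ∫⁻ t in Ioi 0, ENNReal.ofReal (F (k - t)) := by
    have h1 (x : ℝ) : ENNReal.ofReal (k - x) = ENNReal.ofReal (max (k - x) 0) := by simp
    simp_rw [h1]
    rw [lintegral_eq_lintegral_meas_le (f := fun x => max (k - x) 0) _
      (ae_of_all _ fun x => le_max_right _ _) (by fun_prop)]
    refine setLIntegral_congr_fun measurableSet_Ioi fun t ht => ?_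
    have h2 : {a : ℝ | t ≤ max (k - a) 0} = Iic (k - t) := by
      ext a
      have : (0 : ℝ) < t := ht
      simp only [mem_ofPred_eq, le_max_iff, mem_Iic]
      constructor
      · rintro (h | h) <;> linarith
      · intro h; left; linarith
    simp only [h2, F.measure_Iic hF0, sub_zero]
  have hcv : ∫⁻ t in Ioi 0, ENNReal.ofReal (F (k - t))
      = ∫⁻ s in Iio k, ENNReal.ofReal (F s) := by
    rw [← lintegral_indicator measurableSet_Ioi, ← lintegral_indicator measurableSet_Iio,
      ← lintegral_sub_left_eq_self _ k]
    congr 1 with t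
    simp [indicator]
  have hFG' : ∫⁻ s in Iio k, ENNReal.ofReal (F s) = ∫⁻ s in Iio k, ENNReal.ofReal (G s) :=
    lintegral_congr_ae (ae_restrict_of_ae (hFG.mono fun x hx => by simp only [hx]))
  rw [hlc, hcv, hFG']
  have hcov : AECover (volume.restrict (Iio k)) atBot fun a : ℝ => Ioi a := aecover_Ioi tendsto_id
  refine hcov.lintegral_eq_of_tendsto _ hGm.measurable.ennreal_ofReal.aemeasurable ?_
  have hlim : Tendsto (fun a => ENNReal.ofReal (p k - p a)) atBot
      (nhds (ENNReal.ofReal (p k))) := by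
    refine (ENNReal.continuous_ofReal.tendsto _).comp ?_
    simpa using h0.const_sub (p k)
  refine hlim.congr' ?_
  filter_upwards [eventually_le_atBot k] with a ha
  rw [Measure.restrict_restrict measurableSet_Ioi, Ioi_inter_Iio,
    ← intervalIntegral.integral_eq_sub_of_hasDeriv_right_of_le ha hpc.continuousOn
      (fun x _ => hGd x) hGm.intervalIntegrable,
    intervalIntegral.integral_of_le ha, integral_Ioc_eq_integral_Ioo,
    ofReal_integral_eq_lintegral_ofReal _ (ae_of_all _ hGnn)]
  exact (hGm.intervalIntegrable (a := a) (b := k)).1.mono_set Ioo_subset_Ioc_self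

lemma MemM.integrable_max_sub {η : Measure ℝ} (hη : MemM η) (k : ℝ) :
    Integrable (fun x => max (k - x) 0) η :=
  have := hη.1
  ((integrable_const k).sub hη.2).pos_part

lemma MemM.ofReal_Ppot {η : Measure ℝ} (hη : MemM η) (k : ℝ) :
    ENNReal.ofReal (Ppot η k) = ∫⁻ x, ENNReal.ofReal (k - x) ∂η := by
  rw [Ppot, ofReal_integral_eq_lintegral_ofReal (hη.integrable_max_sub k)
    (ae_of_all _ fun x => le_max_right _ _)]
  simp

lemma Ppot_nonneg (η : Measure ℝ) (k : ℝ) : 0 ≤ Ppot η k :=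
  integral_nonneg fun _ => le_max_right _ _

lemma MemM.convexOn_Ppot {η : Measure ℝ} (hη : MemM η) : ConvexOn ℝ univ (Ppot η) := by
  refine ⟨convex_univ, fun x _ y _ a b ha hb hab => ?_⟩
  simp only [Ppot, smul_eq_mul, ← integral_const_mul]
  rw [← integral_add ((hη.integrable_max_sub x).const_mul a)
    ((hη.integrable_max_sub y).const_mul b)]
  refine integral_mono (hη.integrable_max_sub _) (((hη.integrable_max_sub x).const_mul a).add
    ((hη.integrable_max_sub y).const_mul b)) fun t => ?_
  have h1 := mul_le_mul_of_nonneg_left (le_max_left (x - t) 0) ha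
  have h2 := mul_le_mul_of_nonneg_left (le_max_left (y - t) 0) hb
  have h3 := mul_nonneg ha (le_max_right (x - t) 0)
  have h4 := mul_nonneg hb (le_max_right (y - t) 0)
  refine max_le ?_ (add_nonneg h3 h4)
  have : t = a * t + b * t := by rw [← add_mul, hab, one_mul]
  simp only
  linarith

lemma MemM.tendsto_Ppot_atBot {η : Measure ℝ} (hη : MemM η) :
    Tendsto (Ppot η) atBot (nhds 0) := by
  have : Tendsto (Ppot η) atBot (nhds (∫ _, (0 : ℝ) ∂η)) := by
    refine tendsto_integral_filter_of_dominated_convergence (fun x => max (0 - x) 0)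
      (Eventually.of_forall fun k => (hη.integrable_max_sub k).1) ?_ (hη.integrable_max_sub 0) ?_
    · filter_upwards [eventually_le_atBot 0] with k hk
      refine ae_of_all _ fun x => ?_
      rw [Real.norm_of_nonneg (le_max_right _ _)]
      gcongr
    · refine ae_of_all _ fun x => tendsto_const_nhds.congr' ?_
      filter_upwards [eventually_le_atBot x] with k hk
      rw [max_eq_right (by linarith)]
  simpa using this

lemma MemM.add {η χ : Measure ℝ} (hη : MemM η) (hχ : MemM χ) : MemM (η + χ) :=
  have := hη.1
  have := hχ.1
  ⟨inferInstance, hη.2.add_measure hχ.2⟩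

lemma MemM.mono {η χ : Measure ℝ} (hχ : MemM χ) (h : η ≤ χ) : MemM η :=
  have := hχ.1
  ⟨isFiniteMeasure_of_le χ h, hχ.2.mono_measure h⟩

lemma Ppot_add {η χ : Measure ℝ} (hη : MemM η) (hχ : MemM χ) (k : ℝ) :
    Ppot (η + χ) k = Ppot η k + Ppot χ k :=
  integral_add_measure (hη.integrable_max_sub k) (hχ.integrable_max_sub k)

lemma LeCD.Ppot_le {η χ : Measure ℝ} (hη : MemM η) (hχ : MemM χ) (h : LeCD η χ) (k : ℝ) :
    Ppot η k ≤ Ppot χ k := by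
  refine h (fun x => max (k - x) 0) ?_ ?_ (hη.integrable_max_sub k) (hχ.integrable_max_sub k)
  · exact ((convexOn_const k convex_univ).sub (concaveOn_id convex_univ)).sup
      (convexOn_const 0 convex_univ)
  · intro x y hxy
    dsimp only
    gcongr

lemma LeCD.real_univ_eq {η χ : Measure ℝ} (hη : MemM η) (hχ : MemM χ) (h : LeCD η χ) :
    η.real univ = χ.real univ := by
  have := hη.1
  have := hχ.1
  have h1 := h (fun _ => 1) (convexOn_const 1 convex_univ) antitone_const
    (integrable_const _) (integrable_const _)
  have h2 := h (fun _ => -1) (convexOn_const (-1) convex_univ) antitone_const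
    (integrable_const _) (integrable_const _)
  simp only [integral_const, smul_eq_mul] at h1 h2
  linarith

/-- Finite measures with a first moment are determined by their potential. -/
lemma eq_of_lintegral_ofReal_sub_eq {η ν : Measure ℝ} (hν : MemM ν)
    (h : ∀ k, ∫⁻ x, ENNReal.ofReal (k - x) ∂η = ∫⁻ x, ENNReal.ofReal (k - x) ∂ν) : η = ν := by
  have hνf := hν.1
  have hfin (χ : Measure ℝ)
      (hχ : ∀ k, ∫⁻ x, ENNReal.ofReal (k - x) ∂χ = ∫⁻ x, ENNReal.ofReal (k - x) ∂ν) (k : ℝ) :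
      Tendsto (fun n : ℕ => ENNReal.ofReal (n + 1) *
        (∫⁻ x, ENNReal.ofReal (k + 1 / (n + 1) - x) ∂ν - ∫⁻ x, ENNReal.ofReal (k - x) ∂ν))
        atTop (nhds (χ (Iic k))) := by
    have hne (c : ℝ) : ∫⁻ x, ENNReal.ofReal (c - x) ∂χ ≠ ⊤ := by
      rw [hχ, ← hν.ofReal_Ppot]
      exact ENNReal.ofReal_ne_top
    have hlim : Tendsto (fun n : ℕ => ∫⁻ x, ENNReal.ofReal (n + 1) *
        (ENNReal.ofReal (k + 1 / (n + 1) - x) - ENNReal.ofReal (k - x)) ∂χ) atTop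
        (nhds (∫⁻ x, (Iic k).indicator 1 x ∂χ)) := by
      refine tendsto_lintegral_of_dominated_convergence (fun x => ENNReal.ofReal (k + 2 - x))
        (fun n => by fun_prop) ?_ (hne _) ?_
      · intro n
        refine ae_of_all _ fun x => ?_
        dsimp only
        rcases lt_or_ge x (k + 1) with hx | hx
        · calc _ ≤ ENNReal.ofReal (n + 1) * ENNReal.ofReal (1 / (n + 1)) := by
                gcongr
                rw [tsub_le_iff_right]
                refine le_trans (le_of_eq ?_) ENNReal.ofReal_add_le
                ring_nf
            _ = 1 := by
                rw [← ENNReal.ofReal_mul (by positivity), mul_one_div_cancel (by positivity),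
                  ENNReal.ofReal_one]
            _ ≤ _ := by
                rw [← ENNReal.ofReal_one]
                exact ENNReal.ofReal_le_ofReal (by linarith)
        · have : (1 : ℝ) / (n + 1) ≤ 1 := by
            rw [div_le_one (by positivity)]
            linarith [n.cast_nonneg (α := ℝ)]
          rw [ENNReal.ofReal_of_nonpos (p := k + 1 / (n + 1) - x) (by linarith)]
          simp
      · refine ae_of_all _ fun x => ?_
        rcases le_or_gt x k with hx | hx
        · rw [indicator_of_mem (by exact hx)]
          refine tendsto_const_nhds.congr fun n => ?_
          rw [← ENNReal.ofReal_sub _ (by linarith), ← ENNReal.ofReal_mul (by positivity),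
            show k + 1 / ((n : ℝ) + 1) - x - (k - x) = 1 / (n + 1) by ring,
            mul_one_div_cancel (by positivity), ENNReal.ofReal_one, Pi.one_apply]
        · rw [indicator_of_notMem (by simpa using hx)]
          refine tendsto_const_nhds.congr' ?_
          filter_upwards [(tendsto_one_div_add_atTop_nhds_zero_nat (𝕜 := ℝ)).eventually
            (gt_mem_nhds (sub_pos.2 hx))] with n hn
          rw [ENNReal.ofReal_of_nonpos (p := k + 1 / (n + 1) - x) (by linarith)]
          simp
    rw [lintegral_indicator_one measurableSet_Iic] at hlim
    refine hlim.congr fun n => ?_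
    rw [lintegral_const_mul _ (by fun_prop), lintegral_sub (by fun_prop) (hne _), hχ, hχ]
    refine ae_of_all _ fun x => ?_
    have : (0 : ℝ) ≤ 1 / (n + 1) := by positivity
    dsimp only
    gcongr
    linarith
  have hIic (k : ℝ) : η (Iic k) = ν (Iic k) :=
    tendsto_nhds_unique (hfin η h k) (hfin ν (fun _ => rfl) k)
  refine (Measure.ext_of_Iic ν η fun a => (hIic a).symm).symm

lemma real_univ_le_of_Ppot_le {α β : Measure ℝ} (hα : MemM α) (hβ : MemM β)
    (h : ∀ k, Ppot α k ≤ Ppot β k) : α.real univ ≤ β.real univ := by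
  have := hα.1
  have := hβ.1
  by_contra! hlt
  have hd : 0 < α.real univ - β.real univ := sub_pos.2 hlt
  set M := ∫ x, |x| ∂β
  set m := ∫ x, x ∂α
  have hM : 0 ≤ M := integral_nonneg fun _ => abs_nonneg _
  set k := (|m| + M + 1) / (α.real univ - β.real univ) with hk
  have hk0 : 0 ≤ k := by positivity
  have h1 : k * α.real univ - m ≤ Ppot α k := by
    have : ∫ x, (k - x) ∂α = k * α.real univ - m := by
      rw [integral_sub (integrable_const k) hα.2, integral_const, smul_eq_mul, mul_comm]
    rw [← this]
    exact integral_mono ((integrable_const k).sub hα.2) (hα.integrable_max_sub k)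
      fun x => le_max_left _ _
  have h2 : Ppot β k ≤ k * β.real univ + M := by
    have : ∫ x, (k + |x|) ∂β = k * β.real univ + M := by
      rw [integral_add (integrable_const k) hβ.2.abs, integral_const, smul_eq_mul, mul_comm]
    rw [← this]
    refine integral_mono (hβ.integrable_max_sub k) ((integrable_const k).add hβ.2.abs)
      fun x => max_le ?_ (by positivity)
    linarith [neg_abs_le x]
  have h3 : k * (α.real univ - β.real univ) = |m| + M + 1 := by
    rw [hk, div_mul_cancel₀ _ hd.ne']
  linarith [h k, le_abs_self m]

lemma lePCD_of_Ppot_le {α β : Measure ℝ} (hα : MemM α) (hβ : MemM β)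
    (h : ∀ k, Ppot α k ≤ Ppot β k) : LePCD α β := by
  intro f hf0 hfc hfa hfα hfβ
  have := hα.1
  have := hβ.1
  have hmass : α univ ≤ β univ := by
    have := real_univ_le_of_Ppot_le hα hβ h
    rwa [Measure.real, Measure.real, ENNReal.toReal_le_toReal (by simp) (by simp)] at this
  set c := ⨅ x, f x
  have hbdd : BddBelow (range f) := ⟨0, by rintro _ ⟨x, rfl⟩; exact hf0 x⟩
  have hlim : Tendsto f atTop (nhds c) := tendsto_atTop_ciInf hfa hbdd
  have hc0 : 0 ≤ c := le_ciInf hf0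
  have hcle (x : ℝ) : c ≤ f x := ciInf_le hbdd x
  have hp : ConvexOn ℝ univ fun y => f (-y) - c := by
    have := hfc.comp_linearMap (-LinearMap.id)
    exact this.sub (concaveOn_const c convex_univ)
  have hp0 : Tendsto (fun y => f (-y) - c) atBot (nhds 0) := by
    simpa using (hlim.comp tendsto_neg_atBot_atTop).sub_const c
  obtain ⟨ρ, hρ, hρf⟩ := exists_lintegral_ofReal_sub_eq hp hp0
  have hrepr (χ : Measure ℝ) (hχ : MemM χ) : ∫⁻ x, ENNReal.ofReal (f x) ∂χ
      = ∫⁻ y, ENNReal.ofReal (Ppot χ (-y)) ∂ρ + ENNReal.ofReal c * χ univ := by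
    have := hχ.1
    have h1 (x : ℝ) : ENNReal.ofReal (f x)
        = ∫⁻ y, ENNReal.ofReal (-x - y) ∂ρ + ENNReal.ofReal c := by
      rw [hρf, neg_neg, ← ENNReal.ofReal_add (sub_nonneg.2 (hcle x)) hc0, sub_add_cancel]
    simp_rw [h1]
    rw [lintegral_add_right _ measurable_const, lintegral_const,
      lintegral_lintegral_swap (by fun_prop)]
    congr 1
    refine lintegral_congr fun y => ?_
    rw [hχ.ofReal_Ppot]
    refine lintegral_congr fun x => ?_
    ring_nf
  rw [integral_eq_lintegral_of_nonneg_ae (ae_of_all _ hf0) hfα.1,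
    integral_eq_lintegral_of_nonneg_ae (ae_of_all _ hf0) hfβ.1]
  refine ENNReal.toReal_mono ?_ ?_
  · rw [← ofReal_integral_eq_lintegral_ofReal hfβ (ae_of_all _ hf0)]
    exact ENNReal.ofReal_ne_top
  · rw [hrepr α hα, hrepr β hβ]
    gcongr
    exact h _

lemma leCD_of_Ppot_le_s13 {α β : Measure ℝ} (hα : MemM α) (hβ : MemM β)
    (h : ∀ k, Ppot α k ≤ Ppot β k) (hmass : α.real univ = β.real univ) : LeCD α β := by
  intro f hfc hfa hfα hfβ
  have := hα.1
  have := hβ.1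
  have hint {χ : Measure ℝ} [IsFiniteMeasure χ] (hf : Integrable f χ) (n : ℕ) :
      Integrable (fun x => max (f x) (-n)) χ := hf.sup (integrable_const _)
  have hlim {χ : Measure ℝ} [IsFiniteMeasure χ] (hf : Integrable f χ) :
      Tendsto (fun n : ℕ => ∫ x, max (f x) (-n) ∂χ) atTop (nhds (∫ x, f x ∂χ)) := by
    refine tendsto_integral_of_dominated_convergence (fun x => |f x|)
      (fun n => (hint hf n).1) hf.abs (fun n => ae_of_all _ fun x => ?_)
      (ae_of_all _ fun x => tendsto_const_nhds.congr' ?_)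
    · have : (0 : ℝ) ≤ n := n.cast_nonneg
      rw [Real.norm_eq_abs, abs_le]
      exact ⟨(neg_abs_le _).trans (le_max_left _ _),
        max_le (le_abs_self _) (by linarith [abs_nonneg (f x)])⟩
    · filter_upwards [eventually_ge_atTop ⌈-f x⌉₊] with n hn
      have : -f x ≤ n := Nat.ceil_le.1 hn
      rw [max_eq_left (by linarith)]
  refine le_of_tendsto_of_tendsto' (hlim hfα) (hlim hfβ) fun n => ?_
  have key := lePCD_of_Ppot_le hα hβ h (fun x => max (f x) (-n) + n)
    (fun x => by linarith [le_max_right (f x) (-n)])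
    ((hfc.sup (convexOn_const _ convex_univ)).add_const _)
    (fun x y hxy => by
      have := hfa hxy
      dsimp only
      gcongr)
    ((hint hfα n).add (integrable_const _)) ((hint hfβ n).add (integrable_const _))
  rw [integral_add (hint hfα n) (integrable_const _),
    integral_add (hint hfβ n) (integrable_const _), integral_const, integral_const, hmass] at key
  linarith

/-- A continuous function on `ℝ` that is midpoint convex at all small scales around each point is
convex. -/
lemma convexOn_univ_of_forall_exists_midpoint_le {φ : ℝ → ℝ} (hφ : Continuous φ)
    (h : ∀ y, ∃ ε > 0, ∀ δ, 0 < δ → δ < ε → 2 * φ y ≤ φ (y - δ) + φ (y + δ)) :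
    ConvexOn ℝ univ φ := by
  refine LinearOrder.convexOn_of_lt convex_univ fun x _ z _ hxz a b ha hb hab => ?_
  set s := (φ z - φ x) / (z - x) with hs
  set ψ : ℝ → ℝ := fun t => φ t - (φ x + (t - x) * s) with hψ
  have hψc : Continuous ψ := by fun_prop
  have hψx : ψ x = 0 := by simp [hψ]
  have hψz : ψ z = 0 := by
    have : (z - x) * s = φ z - φ x := mul_div_cancel₀ _ (sub_pos.2 hxz).ne'
    simp [hψ, this]
  set w := a • x + b • z with hw
  have hwx : w - x = b * (z - x) := by
    have : a = 1 - b := eq_sub_iff_add_eq.2 hab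
    rw [hw, smul_eq_mul, smul_eq_mul, this]
    ring
  have hwz : w = z - a * (z - x) := by
    have : a = 1 - b := eq_sub_iff_add_eq.2 hab
    rw [this]
    linarith
  suffices ψ w ≤ 0 by
    have h1 : (w - x) * s = b * (φ z - φ x) := by
      rw [hwx, mul_assoc, mul_div_cancel₀ _ (sub_pos.2 hxz).ne']
    have h2 : a = 1 - b := eq_sub_iff_add_eq.2 hab
    simp only [hψ, h1] at this
    rw [smul_eq_mul, smul_eq_mul, h2]
    linarith
  by_contra! hpos
  have hwI : w ∈ Icc x z := by
    have := mul_pos hb (sub_pos.2 hxz)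
    have := mul_pos ha (sub_pos.2 hxz)
    constructor <;> linarith
  obtain ⟨t, htI, htmax⟩ := isCompact_Icc.exists_isMaxOn ⟨w, hwI⟩ hψc.continuousOn
  set M := ψ t
  have hle (u : ℝ) (hu : u ∈ Icc x z) : ψ u ≤ M := htmax hu
  have hMpos : 0 < M := hpos.trans_le (hle w hwI)
  obtain ⟨y, ⟨hyI, hyM⟩, hyleast⟩ :=
    (isCompact_Icc.inter_right (isClosed_singleton.preimage hψc) :
      IsCompact (Icc x z ∩ ψ ⁻¹' {M})).exists_isLeast ⟨t, htI, rfl⟩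
  have hyM : ψ y = M := hyM
  have hxy : x < y := hyI.1.lt_of_ne fun he => by rw [← he, hψx] at hyM; linarith
  have hyz : y < z := hyI.2.lt_of_ne fun he => by rw [he, hψz] at hyM; linarith
  obtain ⟨ε, hε, hmid⟩ := h y
  obtain ⟨δ, hδ0, hδ⟩ := exists_between (lt_min hε (lt_min (sub_pos.2 hxy) (sub_pos.2 hyz)))
  obtain ⟨hδε, hδ'⟩ := lt_min_iff.1 hδ
  obtain ⟨hδx, hδz⟩ := lt_min_iff.1 hδ'
  have h1 : ψ (y - δ) < M := by
    have hmem : y - δ ∈ Icc x z := ⟨by linarith, by linarith⟩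
    refine (hle _ hmem).lt_of_ne fun he => ?_
    have := hyleast ⟨hmem, he⟩
    linarith
  have h2 : ψ (y + δ) ≤ M := hle _ ⟨by linarith, by linarith⟩
  have h3 := hmid δ hδ0 hδε
  simp only [hψ] at h1 h2 hyM
  linarith

lemma exists_isConvexHullFn {F g₀ : ℝ → ℝ} (hg₀ : ConvexOn ℝ univ g₀) (hle : ∀ x, g₀ x ≤ F x) :
    ∃ h, IsConvexHullFn F h := by
  let I := {g : ℝ → ℝ // ConvexOn ℝ univ g ∧ ∀ x, g x ≤ F x}
  have : Nonempty I := ⟨⟨g₀, hg₀, hle⟩⟩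
  have hbdd (x : ℝ) : BddAbove (range fun g : I => g.1 x) :=
    ⟨F x, by rintro _ ⟨g, rfl⟩; exact g.2.2 x⟩
  refine ⟨fun x => ⨆ g : I, g.1 x, ⟨convex_univ, fun x _ y _ a b ha hb hab => ?_⟩,
    fun x => ciSup_le fun g => g.2.2 x, fun g hg hgF x => le_ciSup (hbdd x) ⟨g, hg, hgF⟩⟩
  refine ciSup_le fun g => (g.2.1.2 (mem_univ x) (mem_univ y) ha hb hab).trans ?_
  simp only [smul_eq_mul]
  gcongr
  · exact le_ciSup (hbdd x) g
  · exact le_ciSup (hbdd y) g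

/-- If `h` is the convex hull of `f - g` with `f` and `g` convex, then `f - h` is convex. -/
lemma IsConvexHullFn.convexOn_sub {f g h : ℝ → ℝ} (hh : IsConvexHullFn (fun x => f x - g x) h)
    (hf : ConvexOn ℝ univ f) (hg : ConvexOn ℝ univ g) : ConvexOn ℝ univ fun x => f x - h x := by
  obtain ⟨hhc, hhle, hhmax⟩ := hh
  have hfcont : Continuous f := continuousOn_univ.1 (hf.continuousOn isOpen_univ)
  have hgcont : Continuous g := continuousOn_univ.1 (hg.continuousOn isOpen_univ)
  have hhcont : Continuous h := continuousOn_univ.1 (hhc.continuousOn isOpen_univ)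
  have hmid {u : ℝ → ℝ} (hu : ConvexOn ℝ univ u) (y δ : ℝ) :
      2 * u y ≤ u (y - δ) + u (y + δ) := by
    have := hu.2 (mem_univ (y - δ)) (mem_univ (y + δ)) (show (0 : ℝ) ≤ 1 / 2 by norm_num)
      (show (0 : ℝ) ≤ 1 / 2 by norm_num) (by norm_num)
    simp only [smul_eq_mul] at this
    rw [show 1 / 2 * (y - δ) + 1 / 2 * (y + δ) = y by ring] at this
    linarith
  refine convexOn_univ_of_forall_exists_midpoint_le (by fun_prop) fun y => ?_
  rcases (hhle y).eq_or_lt with heq | hlt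
  · refine ⟨1, one_pos, fun δ _ _ => ?_⟩
    linarith [hhle (y - δ), hhle (y + δ), hmid hg y δ]
  · obtain ⟨m, hm1, hm2⟩ := exists_between hlt
    have hev : ∀ᶠ t in nhds y, h t < m ∧ m < f t - g t :=
      (hhcont.continuousAt.eventually (gt_mem_nhds hm1)).and
        ((hfcont.sub hgcont).continuousAt.eventually (lt_mem_nhds hm2))
    obtain ⟨ε, hε, hball⟩ := Metric.eventually_nhds_iff.1 hev
    refine ⟨ε, hε, fun δ hδ0 hδε => ?_⟩
    have hnear (t : ℝ) (h1 : y - δ ≤ t) (h2 : t ≤ y + δ) : h t < m ∧ m < f t - g t :=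
      hball (by rw [Real.dist_eq, abs_lt]; constructor <;> linarith)
    set s := (h (y + δ) - h (y - δ)) / (2 * δ) with hs
    have hsδ : s * (2 * δ) = h (y + δ) - h (y - δ) := div_mul_cancel₀ _ (by positivity)
    set L : ℝ → ℝ := fun t => h (y - δ) + (t - (y - δ)) * s with hL
    have hLc : ConvexOn ℝ univ L := by
      refine ⟨convex_univ, fun u _ v _ a b _ _ hab => le_of_eq ?_⟩
      have : a = 1 - b := eq_sub_iff_add_eq.2 hab
      simp only [hL, smul_eq_mul, this]
      ring
    have hmax : ∀ t, max (h t) (L t) ≤ f t - g t := by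
      intro t
      refine max_le (hhle t) ?_
      rcases lt_or_ge t (y - δ) with ht | ht
      · refine le_trans ?_ (hhle t)
        have := hhc.slope_mono_adjacent (mem_univ t) (mem_univ (y + δ)) ht
          (show y - δ < y + δ by linarith)
        rw [show y + δ - (y - δ) = 2 * δ by ring, ← hs, div_le_iff₀ (by linarith)] at this
        simp only [hL]
        linarith
      rcases lt_or_ge (y + δ) t with ht' | ht'
      · refine le_trans ?_ (hhle t)
        have := hhc.slope_mono_adjacent (mem_univ (y - δ)) (mem_univ t)
          (show y - δ < y + δ by linarith) ht'
        rw [show y + δ - (y - δ) = 2 * δ by ring, ← hs, le_div_iff₀ (by linarith)] at this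
        simp only [hL]
        linarith
      · refine le_trans ?_ (hnear t ht ht').2.le
        have hl := (hnear (y - δ) le_rfl (by linarith)).1
        have hr := (hnear (y + δ) (by linarith) le_rfl).1
        have hLr : L (y + δ) = h (y + δ) := by
          simp only [hL]
          linarith
        have hLl : L (y - δ) = h (y - δ) := by simp [hL]
        have := hLc.le_max_of_mem_Icc (mem_univ (y - δ)) (mem_univ (y + δ)) ⟨ht, ht'⟩
        rw [hLl, hLr] at this
        exact this.trans (max_le hl.le hr.le)
    have hLy : L y ≤ h y :=
      (le_max_right _ _).trans (hhmax (fun t => max (h t) (L t)) (hhc.sup hLc) hmax y)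
    have hLy' : 2 * L y = h (y - δ) + h (y + δ) := by
      simp only [hL]
      linarith
    linarith [hmid hf y δ]

/-- The potential of the complement `ν - S` of a shadow dominates every convex function below
`P_ν - P_μ`. -/
lemma IsShadow.le_Ppot_sub {μ ν S : Measure ℝ} (hμ : MemM μ) (hν : MemM ν) (hS : IsShadow μ ν S)
    {g : ℝ → ℝ} (hg : ConvexOn ℝ univ g) (hle : ∀ k, g k ≤ Ppot ν k - Ppot μ k) (k : ℝ) :
    g k ≤ Ppot ν k - Ppot S k := by
  obtain ⟨hSM, hμS, hSν, hSmin⟩ := hS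
  have hSν : S ≤ ν := Measure.le_iff.2 hSν
  have := hSM.1
  have hdM : MemM (ν - S) := hν.mono Measure.sub_le
  have hd (k : ℝ) : Ppot (ν - S) k = Ppot ν k - Ppot S k := by
    rw [eq_sub_iff_add_eq, ← Ppot_add hdM hSM, Measure.sub_add_cancel_of_le hSν]
  have hd_le (k : ℝ) : Ppot (ν - S) k ≤ Ppot ν k - Ppot μ k := by
    linarith [hd k, hμS.Ppot_le hμ hSM k]
  obtain ⟨h, hh⟩ := exists_isConvexHullFn (F := fun k => Ppot ν k - Ppot μ k)
    hdM.convexOn_Ppot hd_le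
  have hpconv := hh.convexOn_sub hν.convexOn_Ppot hμ.convexOn_Ppot
  obtain ⟨hhc, hhle, hhmax⟩ := hh
  have hhlow := hhmax _ hdM.convexOn_Ppot hd_le
  have hh0 (k : ℝ) : 0 ≤ h k := (Ppot_nonneg _ k).trans (hhlow k)
  have hp0 (k : ℝ) : 0 ≤ Ppot ν k - h k := by linarith [hhle k, Ppot_nonneg μ k]
  have hhlim : Tendsto h atBot (nhds 0) :=
    squeeze_zero hh0 (fun k => by linarith [hp0 k]) hν.tendsto_Ppot_atBot
  have hplim : Tendsto (fun k => Ppot ν k - h k) atBot (nhds 0) :=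
    squeeze_zero hp0 (fun k => by linarith [hh0 k]) hν.tendsto_Ppot_atBot
  obtain ⟨η, -, hη⟩ := exists_lintegral_ofReal_sub_eq hpconv hplim
  obtain ⟨θ, -, hθ⟩ := exists_lintegral_ofReal_sub_eq hhc hhlim
  have hsum : η + θ = ν := by
    refine eq_of_lintegral_ofReal_sub_eq hν fun k => ?_
    rw [lintegral_add_measure, hη, hθ, ← ENNReal.ofReal_add (hp0 k) (hh0 k), sub_add_cancel,
      hν.ofReal_Ppot]
  have hην : η ≤ ν := hsum ▸ Measure.le_add_right le_rfl
  have hηM : MemM η := hν.mono hην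
  have hηP (k : ℝ) : Ppot η k = Ppot ν k - h k := by
    rw [← ENNReal.ofReal_eq_ofReal_iff (Ppot_nonneg _ _) (hp0 k), hηM.ofReal_Ppot, hη]
  have hμη (k : ℝ) : Ppot μ k ≤ Ppot η k := by linarith [hηP k, hhle k]
  have hηS (k : ℝ) : Ppot η k ≤ Ppot S k := by linarith [hηP k, hhlow k, hd k]
  have hmass : μ.real univ = η.real univ :=
    (real_univ_le_of_Ppot_le hμ hηM hμη).antisymm
      ((real_univ_le_of_Ppot_le hηM hSM hηS).trans_eq (hμS.real_univ_eq hμ hSM).symm)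
  have hmin := hSmin η hηM (leCD_of_Ppot_le_s13 hμ hηM hμη hmass) fun A _ => hην A
  linarith [hmin.Ppot_le hSM hηM k, hηP k, hhmax g hg hle k]

/-- Proposition 3.11: associativity of the shadow measure. -/
theorem shadow_associativity
    (μ₁ μ₂ ν : MeasureTheory.Measure ℝ)
    (hμ₁ : MemM μ₁) (hμ₂ : MemM μ₂) (hν : MemM ν)
    (hpcd : LePCD (μ₁ + μ₂) ν)
    (S₁ : MeasureTheory.Measure ℝ) (hS₁ : IsShadow μ₁ ν S₁)
    (ν' : MeasureTheory.Measure ℝ) (hν' : MemM ν') (hsum : S₁ + ν' = ν) :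
    LePCD μ₂ ν' ∧
    ∀ S₂ S : MeasureTheory.Measure ℝ,
      IsShadow μ₂ ν' S₂ → IsShadow (μ₁ + μ₂) ν S → S = S₁ + S₂ := by
  have hμ : MemM (μ₁ + μ₂) := hμ₁.add hμ₂
  have hS₁M : MemM S₁ := hS₁.1
  have hν'P (k : ℝ) : Ppot ν' k = Ppot ν k - Ppot S₁ k := by
    rw [← hsum, Ppot_add hS₁M hν', add_sub_cancel_left]
  have hμP (k : ℝ) : Ppot (μ₁ + μ₂) k = Ppot μ₁ k + Ppot μ₂ k := Ppot_add hμ₁ hμ₂ k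
  constructor
  · refine lePCD_of_Ppot_le hμ₂ hν' fun k => ?_
    rw [hν'P]
    refine hS₁.le_Ppot_sub hμ₁ hν hμ₂.convexOn_Ppot (fun k => ?_) k
    have := hpcd (fun x => max (k - x) 0) (fun x => le_max_right _ _)
      (((convexOn_const k convex_univ).sub (concaveOn_id convex_univ)).sup
        (convexOn_const 0 convex_univ))
      (fun x y hxy => by dsimp only; gcongr)
      (hμ.integrable_max_sub k) (hν.integrable_max_sub k)
    have : Ppot (μ₁ + μ₂) k ≤ Ppot ν k := this
    linarith [hμP k]
  · intro S₂ S hS₂ hS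
    have hS₂M : MemM S₂ := hS₂.1
    have hSM : MemM S := hS.1
    have hTM : MemM (S₁ + S₂) := hS₁M.add hS₂M
    have hTP (k : ℝ) : Ppot (S₁ + S₂) k = Ppot S₁ k + Ppot S₂ k := Ppot_add hS₁M hS₂M k
    have hSν : S ≤ ν := Measure.le_iff.2 hS.2.2.1
    have hS₂ν' : S₂ ≤ ν' := Measure.le_iff.2 hS₂.2.2.1
    have hTν : S₁ + S₂ ≤ ν := hsum ▸ add_le_add_right hS₂ν' S₁
    have hμT : LeCD (μ₁ + μ₂) (S₁ + S₂) := by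
      intro f hfc hfa hfμ hfT
      rw [integrable_add_measure] at hfμ hfT
      rw [integral_add_measure hfμ.1 hfμ.2, integral_add_measure hfT.1 hfT.2]
      exact add_le_add (hS₁.2.1 f hfc hfa hfμ.1 hfT.1) (hS₂.2.1 f hfc hfa hfμ.2 hfT.2)
    have hST (k : ℝ) : Ppot S k ≤ Ppot (S₁ + S₂) k :=
      (hS.2.2.2 _ hTM hμT fun A _ => hTν A).Ppot_le hSM hTM k
    have := hSM.1
    have hdM : MemM (ν - S) := hν.mono Measure.sub_le
    have hd (k : ℝ) : Ppot (ν - S) k = Ppot ν k - Ppot S k := by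
      rw [eq_sub_iff_add_eq, ← Ppot_add hdM hSM, Measure.sub_add_cancel_of_le hSν]
    have h1 (k : ℝ) : Ppot (ν - S + μ₂) k ≤ Ppot ν k - Ppot S₁ k := by
      refine hS₁.le_Ppot_sub hμ₁ hν (hdM.add hμ₂).convexOn_Ppot (fun k => ?_) k
      linarith [Ppot_add hdM hμ₂ k, hd k, hS.2.1.Ppot_le hμ hSM k, hμP k]
    have h2 (k : ℝ) : Ppot (ν - S) k ≤ Ppot ν' k - Ppot S₂ k := by
      refine hS₂.le_Ppot_sub hμ₂ hν' hdM.convexOn_Ppot (fun k => ?_) k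
      linarith [Ppot_add hdM hμ₂ k, h1 k, hν'P k]
    have hTS (k : ℝ) : Ppot (S₁ + S₂) k ≤ Ppot S k := by
      linarith [h2 k, hd k, hν'P k, hTP k]
    refine eq_of_lintegral_ofReal_sub_eq hTM fun k => ?_
    rw [← hSM.ofReal_Ppot, ← hTM.ofReal_Ppot, (hST k).antisymm (hTS k)]
end
end
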